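/- For every real C ≥ 1 there exists K ≥ 1 (depending only on C) such that the following holds. Let (X, μ) be a C-coarse median space, let x, y ∈ X, let R ≥ 0, and let a, b ∈ X be points lying in the closed R-neighbourhood N_R([x,y]_μ) of the interval [x,y]_μ. Then the interval [a,b]_μ is contained in the closed neighbourhood N_{K·R+K}([x,y]_μ). -/

import Mathlib

open Metric Set

universe u

/-- A `C`-coarse median on a metric space `X`. -/
def IsCoarseMedian {X : Type*} [MetricSpace X] (C : ℝ) (μ : X → X → X → X) : Prop :=
  (∀ x y z : X, μ x y z = μ y x z) ∧
  (∀ x y z : X, μ x y z = μ x z y) ∧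
  (∀ x y : X, μ x x y = x) ∧
  (∀ x y z w : X, dist (μ (μ x w y) w z) (μ x w (μ y w z)) ≤ C) ∧
  (∀ x y z w : X, dist (μ x y z) (μ w y z) ≤ C * dist x w + C)

/-- The coarse median interval `[x,y]_μ = {μ x y z : z ∈ X}`. -/
def cmInterval {X : Type*} [MetricSpace X] (μ : X → X → X → X) (x y : X) : Set X :=
  {w : X | ∃ z : X, μ x y z = w}

/-- The closed `R`-neighbourhood `{x : dist(x, A) ≤ R}` of a set. -/
def closedNbhd {X : Type*} [MetricSpace X] (R : ℝ) (A : Set X) : Set X :=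
  {x : X | Metric.infDist x A ≤ R}

/-- `A` is `D`-quasiconvex with respect to the coarse median `μ`. -/
def IsCMQuasiconvex {X : Type*} [MetricSpace X] (μ : X → X → X → X) (D : ℝ) (A : Set X) :
    Prop :=
  ∀ a₁ ∈ A, ∀ a₂ ∈ A, cmInterval μ a₁ a₂ ⊆ closedNbhd D A

/-- A metric space is geodesic if any two points are joined by an isometrically embedded
compact real interval. -/
def IsGeodesicSpace (X : Type*) [MetricSpace X] : Prop :=
  ∀ x y : X, ∃ γ : ℝ → X, γ 0 = x ∧ γ (dist x y) = y ∧
    ∀ s ∈ Set.Icc (0 : ℝ) (dist x y), ∀ t ∈ Set.Icc (0 : ℝ) (dist x y),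
      dist (γ s) (γ t) = |s - t|

/-- An `(L, A)`-quasigeodesic from `x` to `y`, defined on the interval `[a, b]`. -/
def IsQuasigeodesicOn {X : Type*} [MetricSpace X] (L A a b : ℝ) (γ : ℝ → X) (x y : X) :
    Prop :=
  a ≤ b ∧ γ a = x ∧ γ b = y ∧
    ∀ s ∈ Set.Icc a b, ∀ t ∈ Set.Icc a b,
      |s - t| / L - A ≤ dist (γ s) (γ t) ∧ dist (γ s) (γ t) ≤ L * |s - t| + A

/-- The Gromov product `⟨y,z⟩_x`. -/
noncomputable def gromovProd {X : Type*} [MetricSpace X] (x y z : X) : ℝ :=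
  (dist x y + dist x z - dist y z) / 2

/-- `X` is `δ`-hyperbolic (four-point condition on Gromov products). -/
def IsDeltaHyperbolic (X : Type*) [MetricSpace X] (δ : ℝ) : Prop :=
  ∀ w x y z : X, min (gromovProd w x y) (gromovProd w y z) ≤ gromovProd w x z + δ

/-!
In an exact median algebra, `[x, y]` is convex: fix `m ∈ [a, b]` with `a, b ∈ [x, y]`, order the
space by `p ≤ q ↔ p ∈ [x, q]`, whose meet is `p ∧ q = μ p x q`, and put `u = m ∧ a`, `v = m ∧ b`,
`n = m ∧ y`. As `a, b ≤ y`, both `u ≤ n ≤ m` and `v ≤ n ≤ m`, so `n` lies in `[u, m]` and in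
`[v, m]`. But `m ∈ [a, b]` forces `m ∈ [u, v]`, so `u, n, m, v` occur in this order; since `n` also
lies between `v` and `m`, it equals `m`. Thus `m = n ∈ [x, y]`. Every step uses the axioms a
bounded number of times, so for a `C`-coarse median it holds up to an error depending only on `C`.
Replacing endpoints by points of `[x, y]` at distance about `R` costs an error linear in `R`.
-/

/-- Coarse betweenness, `a ∈ [p, b]` up to an error `r`. In an exact median algebra `a ∈ [p, b]` if
and only if `μ a p b = a`; the base point `p` stands in the middle because `(a, b) ↦ μ a p b` is the
operation that the four-point axiom makes coarsely associative. -/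
def CoarseBetween {X : Type*} [MetricSpace X] (μ : X → X → X → X) (r : ℝ) (p a b : X) : Prop :=
  dist (μ a p b) a ≤ r

section CoarseMedian

variable {X : Type*} [MetricSpace X] {C r s : ℝ} {μ : X → X → X → X}

namespace IsCoarseMedian

lemma swap_left (h : IsCoarseMedian C μ) (x y z : X) : μ x y z = μ y x z := h.1 x y z

lemma swap_right (h : IsCoarseMedian C μ) (x y z : X) : μ x y z = μ x z y := h.2.1 x y z

lemma rotate (h : IsCoarseMedian C μ) (x y z : X) : μ x y z = μ y z x := by
  rw [h.swap_left, h.swap_right]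

lemma self_left (h : IsCoarseMedian C μ) (x y : X) : μ x x y = x := h.2.2.1 x y

lemma self_outer (h : IsCoarseMedian C μ) (x y : X) : μ x y x = x := by
  rw [h.swap_right, h.self_left]

lemma self_right (h : IsCoarseMedian C μ) (x y : X) : μ x y y = y := by
  rw [h.rotate, h.self_left]

lemma dist_assoc_le (h : IsCoarseMedian C μ) (x y z p : X) :
    dist (μ (μ x p y) p z) (μ x p (μ y p z)) ≤ C := h.2.2.2.1 x y z p

lemma nonneg (h : IsCoarseMedian C μ) (x : X) : 0 ≤ C :=
  dist_nonneg.trans (h.dist_assoc_le x x x x)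

lemma dist_left_le (h : IsCoarseMedian C μ) {x w : X} (hxw : dist x w ≤ r) (y z : X) :
    dist (μ x y z) (μ w y z) ≤ C * r + C := by
  have := h.nonneg x
  exact (h.2.2.2.2 x y z w).trans (by gcongr)

lemma dist_right_le (h : IsCoarseMedian C μ) {z w : X} (hzw : dist z w ≤ r) (x y : X) :
    dist (μ x y z) (μ x y w) ≤ C * r + C := by
  rw [← h.rotate z, ← h.rotate w]
  exact h.dist_left_le hzw x y

lemma dist_left_middle_le (h : IsCoarseMedian C μ) {a a' b b' : X} (ha : dist a a' ≤ r)
    (hb : dist b b' ≤ s) (z : X) :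
    dist (μ a b z) (μ a' b' z) ≤ C * (r + s) + 2 * C := by
  have hb' : dist (μ a' b z) (μ a' b' z) ≤ C * s + C := by
    rw [h.swap_left a', h.swap_left a']
    exact h.dist_left_le hb a' z
  linarith [dist_triangle (μ a b z) (μ a' b z) (μ a' b' z), h.dist_left_le ha b z]

lemma coarseBetween_median (h : IsCoarseMedian C μ) (x y z : X) :
    CoarseBetween μ C x (μ x y z) y := by
  have hassoc := h.dist_assoc_le z y y x
  rwa [h.self_outer, h.rotate z x y] at hassoc

lemma coarseBetween_of_mem_cmInterval (h : IsCoarseMedian C μ) {x y w : X}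
    (hw : w ∈ cmInterval μ x y) : CoarseBetween μ C x w y := by
  obtain ⟨z, rfl⟩ := hw
  exact h.coarseBetween_median x y z

end IsCoarseMedian

namespace CoarseBetween

lemma symm (h : IsCoarseMedian C μ) {p a b : X} (hab : CoarseBetween μ r p a b) :
    CoarseBetween μ r b a p := by
  unfold CoarseBetween at *
  rwa [h.swap_right]

lemma mono {p a b : X} (hab : CoarseBetween μ r p a b) (hrs : r ≤ s) : CoarseBetween μ s p a b :=
  le_trans hab hrs

lemma trans_left (h : IsCoarseMedian C μ) {p a b c : X} (hbc : CoarseBetween μ s p b c)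
    (hab : CoarseBetween μ r p a b) :
    CoarseBetween μ ((C + 1) * r + C * s + 3 * C) p a c := by
  have habc : dist (μ a p c) (μ (μ a p b) p c) ≤ C * r + C := by
    rw [dist_comm]
    exact h.dist_left_le hab p c
  calc dist (μ a p c) a
      ≤ dist (μ a p c) (μ (μ a p b) p c) + dist (μ (μ a p b) p c) (μ a p (μ b p c))
        + dist (μ a p (μ b p c)) (μ a p b) + dist (μ a p b) a :=
        (dist_triangle _ (μ a p b) _).trans (by gcongr; exact dist_triangle4 _ _ _ _)
    _ ≤ (C * r + C) + C + (C * s + C) + r := by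
        gcongr
        exacts [h.dist_assoc_le a b c p, h.dist_right_le hbc a p, hab]
    _ = (C + 1) * r + C * s + 3 * C := by ring

lemma trans_left_right (h : IsCoarseMedian C μ) {p a b c : X} (hbc : CoarseBetween μ s p b c)
    (hab : CoarseBetween μ r p a b) : CoarseBetween μ (C * (r + s) + 3 * C) a b c := by
  have hleft : dist (μ a b c) (μ (μ a b p) b c) ≤ C * r + C := by
    rw [dist_comm, h.swap_right a b p]
    exact h.dist_left_le hab b c
  have hright : dist (μ a b (μ p b c)) b ≤ C * s + C := by
    rw [h.swap_left p b c]
    simpa only [h.self_right] using h.dist_right_le hbc a b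
  calc dist (μ b a c) b
      = dist (μ a b c) b := by rw [h.swap_left]
    _ ≤ dist (μ a b c) (μ (μ a b p) b c) + dist (μ (μ a b p) b c) (μ a b (μ p b c))
        + dist (μ a b (μ p b c)) b := dist_triangle4 _ _ _ _
    _ ≤ (C * r + C) + C + (C * s + C) := by
        gcongr
        exact h.dist_assoc_le a p c b
    _ = C * (r + s) + 3 * C := by ring

lemma median_right (h : IsCoarseMedian C μ) {p u a b : X} (ha : CoarseBetween μ r p u a)
    (hb : CoarseBetween μ s p u b) : CoarseBetween μ (C * r + s + 2 * C) p u (μ a p b) := by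
  have hassoc : dist (μ u p (μ a p b)) (μ (μ u p a) p b) ≤ C := by
    rw [dist_comm]
    exact h.dist_assoc_le u a b p
  calc dist (μ u p (μ a p b)) u
      ≤ dist (μ u p (μ a p b)) (μ (μ u p a) p b) + dist (μ (μ u p a) p b) (μ u p b)
        + dist (μ u p b) u := dist_triangle4 _ _ _ _
    _ ≤ C + (C * r + C) + s := by
        gcongr
        exacts [h.dist_left_le ha p b, hb]
    _ = C * r + s + 2 * C := by ring

lemma dist_le_of_antisymm (h : IsCoarseMedian C μ) {p a b : X} (hab : CoarseBetween μ r p a b)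
    (hba : CoarseBetween μ s p b a) : dist a b ≤ r + s := by
  have ha : dist a (μ a p b) ≤ r := by
    rw [dist_comm]
    exact hab
  have hb : dist (μ a p b) b ≤ s := by
    rw [h.rotate a, h.swap_left p]
    exact hba
  exact (dist_triangle a (μ a p b) b).trans (add_le_add ha hb)

lemma median_mono (h : IsCoarseMedian C μ) {x a y : X} (hay : CoarseBetween μ r x a y) (m : X) :
    CoarseBetween μ (2 * C ^ 2 + C * r + 6 * C) x (μ m x a) (μ m x y) := by
  have hum : CoarseBetween μ C x (μ m x a) m := (h.coarseBetween_median m x a).symm h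
  have hua : CoarseBetween μ C x (μ m x a) a := by
    rw [h.rotate]
    exact h.coarseBetween_median x a m
  exact (hum.median_right h (hay.trans_left h hua)).mono (by linarith)

lemma between_medians (h : IsCoarseMedian C μ) {a m b : X} (hm : CoarseBetween μ r a m b) (x : X) :
    CoarseBetween μ (C ^ 3 + C ^ 2 * r + 4 * C ^ 2 + 3 * C) (μ m x a) m (μ m x b) := by
  have hmedian (c : X) : CoarseBetween μ C c (μ m x c) m := by
    rw [h.swap_right]
    exact (h.coarseBetween_median m c x).symm h
  have hub : CoarseBetween μ (C * (C + r) + 3 * C) (μ m x a) m b :=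
    hm.trans_left_right h (hmedian a)
  exact (((hub.symm h).trans_left_right h (hmedian b)).symm h).mono (by linarith)

end CoarseBetween

namespace IsCoarseMedian

lemma dist_median_le_of_mem_cmInterval (h : IsCoarseMedian C μ) {x y a b m : X}
    (ha : a ∈ cmInterval μ x y) (hb : b ∈ cmInterval μ x y) (hm : m ∈ cmInterval μ a b) :
    dist m (μ x y m) ≤ 5 * C ^ 4 + 14 * C ^ 3 + 13 * C ^ 2 + 6 * C := by
  rw [← h.rotate m x y]
  set u := μ m x a
  set v := μ m x b
  set n := μ m x y
  have hnm : CoarseBetween μ C x n m := (h.coarseBetween_median m x y).symm h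
  have hun : CoarseBetween μ (3 * C ^ 2 + 6 * C) x u n :=
    ((h.coarseBetween_of_mem_cmInterval ha).median_mono h m).mono (by linarith)
  have hvn : CoarseBetween μ (3 * C ^ 2 + 6 * C) x v n :=
    ((h.coarseBetween_of_mem_cmInterval hb).median_mono h m).mono (by linarith)
  have hunm : CoarseBetween μ (3 * C ^ 3 + 7 * C ^ 2 + 3 * C) u n m :=
    (hnm.trans_left_right h hun).mono (by linarith)
  have hvnm : CoarseBetween μ (3 * C ^ 3 + 7 * C ^ 2 + 3 * C) v n m :=
    (hnm.trans_left_right h hvn).mono (by linarith)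
  have humv : CoarseBetween μ (2 * C ^ 3 + 4 * C ^ 2 + 3 * C) u m v :=
    ((h.coarseBetween_of_mem_cmInterval hm).between_medians h x).mono (by linarith)
  have hnmv : CoarseBetween μ (5 * C ^ 4 + 11 * C ^ 3 + 6 * C ^ 2 + 3 * C) n m v :=
    (humv.trans_left_right h hunm).mono (by linarith)
  rw [dist_comm]
  exact (hvnm.dist_le_of_antisymm h (hnmv.symm h)).trans (by linarith)

theorem isCMQuasiconvex_cmInterval (h : IsCoarseMedian C μ) (x y : X) :
    IsCMQuasiconvex μ (5 * C ^ 4 + 14 * C ^ 3 + 13 * C ^ 2 + 6 * C) (cmInterval μ x y) :=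
  fun _ ha _ hb m hm ↦
    have hproj : μ x y m ∈ cmInterval μ x y := ⟨m, rfl⟩
    (infDist_le_dist_of_mem hproj).trans (h.dist_median_le_of_mem_cmInterval ha hb hm)

end IsCoarseMedian

theorem IsCMQuasiconvex.cmInterval_subset_closedNbhd {A : Set X} {D R : ℝ}
    (hA : IsCMQuasiconvex μ D A) (h : IsCoarseMedian C μ) (hne : A.Nonempty) (hRr : R < r) {a b : X}
    (ha : a ∈ closedNbhd R A) (hb : b ∈ closedNbhd R A) :
    cmInterval μ a b ⊆ closedNbhd (2 * C * r + 2 * C + D) A := by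
  rintro _ ⟨z, rfl⟩
  obtain ⟨a', ha', haa'⟩ := (infDist_lt_iff hne).1 (lt_of_le_of_lt ha hRr)
  obtain ⟨b', hb', hbb'⟩ := (infDist_lt_iff hne).1 (lt_of_le_of_lt hb hRr)
  calc infDist (μ a b z) A
      ≤ infDist (μ a' b' z) A + dist (μ a b z) (μ a' b' z) := infDist_le_infDist_add_dist
    _ ≤ D + (C * (r + r) + 2 * C) :=
        add_le_add (hA a' ha' b' hb' ⟨z, rfl⟩) (h.dist_left_middle_le haa'.le hbb'.le z)
    _ = 2 * C * r + 2 * C + D := by ring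

end CoarseMedian

/-- Lemma 2.2(4): intervals with endpoints near an interval stay uniformly close to it. -/
theorem interval_nearby_interval_subset_nbhd :
    ∀ C : ℝ, 1 ≤ C → ∃ K : ℝ, 1 ≤ K ∧
      ∀ (X : Type u) [MetricSpace X], ∀ μ : X → X → X → X, IsCoarseMedian C μ →
        ∀ (x y : X) (R : ℝ), 0 ≤ R → ∀ a b : X,
          a ∈ closedNbhd R (cmInterval μ x y) → b ∈ closedNbhd R (cmInterval μ x y) →
            cmInterval μ a b ⊆ closedNbhd (K * R + K) (cmInterval μ x y) := by
  intro C hC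
  set D := 5 * C ^ 4 + 14 * C ^ 3 + 13 * C ^ 2 + 6 * C
  have hD : 0 ≤ D := by positivity
  refine ⟨4 * C + D, by linarith, fun X _ μ h x y R hR a b ha hb w hw ↦ ?_⟩
  have hnear : infDist w (cmInterval μ x y) ≤ 2 * C * (R + 1) + 2 * C + D :=
    (h.isCMQuasiconvex_cmInterval x y).cmInterval_subset_closedNbhd h ⟨_, x, rfl⟩
      (lt_add_one R) ha hb hw
  calc infDist w (cmInterval μ x y)
      ≤ 2 * C * (R + 1) + 2 * C + D := hnear
    _ ≤ (4 * C + D) * R + (4 * C + D) := by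
        nlinarith [mul_nonneg (zero_le_one.trans hC) hR, mul_nonneg hD hR]
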